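/- Let F : 𝒞 → ℳ be an exact inclusion of a strong Serre subcategory admitting a right adjoint, with both 𝒞 and ℳ having enough injectives and satisfying AB4*-n for some nonnegative integer n. Then the induced functor RF : D(𝒞) → D_𝒞(ℳ) between unbounded derived categories is an equivalence. -/

import Mathlib

/-!
STATEMENT 16 (Theorem 1.4): Let `F : 𝒞 → ℳ` be an exact inclusion of a strong Serre
subcategory admitting a right adjoint, with both `𝒞` and `ℳ` having enough injectives and
satisfying AB4*-n for some nonnegative integer `n`.  Then the induced functor
`RF : D(𝒞) → D_𝒞(ℳ)` between unbounded derived categories is an equivalence.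

The equivalence is expressed, for `L = F.mapDerivedCategory`: `L` is bijective on all
morphisms (full faithfulness — `D_𝒞(ℳ)` is a full subcategory of `D(ℳ)`), and every object
of `D(ℳ)` with all cohomology in (the essential image of) `𝒞` is isomorphic to `L X` for
some `X` (essential surjectivity onto `D_𝒞(ℳ)`).
-/

open CategoryTheory Limits

universe w w' v u v' u'

/-- AB4*-`n`: the derived functors of product, computed via injective resolutions, vanish in
degrees `> n`. -/
def AB4StarMinus (C : Type u) [Category.{v} C] [Abelian C] [HasProducts.{0} C] (n : ℕ) : Prop :=
  ∀ (I : Type) (A : I → C) (R : ∀ i, InjectiveResolution (A i)) (q : ℕ), n < q →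
    IsZero ((HomologicalComplex.homologyFunctor C (ComplexShape.up ℕ) q).obj
      (∏ᶜ fun i => (R i).cocomplex))

/-- `𝒞` is a strong Serre subcategory of `ℳ` via the exact inclusion `F`. -/
def IsStrongSerre {C : Type u} [Category.{v} C] [Abelian C] [HasDerivedCategory.{w} C]
    {M : Type u'} [Category.{v'} M] [Abelian M] [HasDerivedCategory.{w'} M]
    (F : C ⥤ M) [F.Additive] [PreservesFiniteLimits F] [PreservesFiniteColimits F] : Prop :=
  ∀ (a b : C) (i : ℕ),
    Function.Bijective (fun f : ((DerivedCategory.singleFunctor C 0).obj a ⟶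
        ((DerivedCategory.singleFunctor C 0).obj b)⟦(i : ℤ)⟧) => F.mapDerivedCategory.map f)

/-!
Write `Φ` for the derived functor of `F`. A morphism `ε : Φ X ⟶ Y` is *couniversal* if it is the
counit at `Y` of a right adjoint of `Φ`. It suffices that every `Y` with cohomology in `C` admits a
couniversal `ε` which is an isomorphism.

* If `Y` is bounded below, a couniversal morphism exists: replace `Y` by a complex `J` of injectives
  and apply `G` termwise. For `Y` a single object of `C` its being an isomorphism is the strong
  Serre condition, and dévissage by truncation extends this to bounded below `Y` with cohomology
  in `C`.
* Couniversal morphisms are stable under products and cones, hence under homotopy limits. An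
  arbitrary `Y` is the homotopy limit of the bounded below `τ≥-k Y`: by AB4*-`n` a product of
  complexes in degrees `≤ b` lies in degrees `≤ b + n`, so each cohomology object of a homotopy
  limit is already that of a single stage, both in `C` and in `M`.
-/

namespace UnboundedEquivalence

open DerivedCategory Pretriangulated Opposite

section KInjective

variable {A : Type u} [Category.{v} A] [Abelian A] [HasDerivedCategory.{w} A]

lemma exists_Q_map_eq {K L : CochainComplex A ℤ} [L.IsKInjective] (g : Q.obj K ⟶ Q.obj L) :
    ∃ f : K ⟶ L, Q.map f = g := by
  obtain ⟨f, hf⟩ := (CochainComplex.IsKInjective.Qh_map_bijective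
    ((HomotopyCategory.quotient _ _).obj K) L).surjective
      ((quotientCompQhIso A).hom.app K ≫ g ≫ (quotientCompQhIso A).inv.app L)
  obtain ⟨f, rfl⟩ := (HomotopyCategory.quotient _ _).map_surjective f
  refine ⟨f, ?_⟩
  have h := (quotientCompQhIso A).hom.naturality f
  rw [Functor.comp_map, hf] at h
  simpa using h.symm

lemma Q_map_eq_zero_of_homotopy {K L : CochainComplex A ℤ} {f : K ⟶ L} (h : Homotopy f 0) :
    Q.map f = 0 := by
  have nat := (quotientCompQhIso A).hom.naturality f
  rw [Functor.comp_map, HomotopyCategory.eq_of_homotopy f 0 h] at nat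
  simpa using nat.symm

lemma Q_map_eq_zero_iff {K L : CochainComplex A ℤ} [L.IsKInjective] (f : K ⟶ L) :
    Q.map f = 0 ↔ Nonempty (Homotopy f 0) := by
  refine ⟨fun hf => ⟨HomotopyCategory.homotopyOfEq _ _ ?_⟩, fun ⟨h⟩ => Q_map_eq_zero_of_homotopy h⟩
  apply (CochainComplex.IsKInjective.Qh_map_bijective
    ((HomotopyCategory.quotient _ _).obj K) L).injective
  have nat := (quotientCompQhIso A).hom.naturality f
  rw [hf, comp_zero] at nat
  rw [Functor.map_zero, Functor.map_zero, ← cancel_mono ((quotientCompQhIso A).hom.app L),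
    zero_comp]
  exact nat

lemma exists_injective_iso_Q_obj [EnoughInjectives A] {X : DerivedCategory A}
    (hX : TStructure.t.plus X) :
    ∃ (J : CochainComplex A ℤ) (b : ℤ), J.IsStrictlyGE b ∧ (∀ n, Injective (J.X n)) ∧
      Nonempty (Q.obj J ≅ X) := by
  obtain ⟨b, hb⟩ := hX
  have : X.IsGE b := ⟨hb.1⟩
  obtain ⟨L, _, ⟨e⟩⟩ := DerivedCategory.exists_iso_Q_obj_of_isGE X b
  obtain ⟨J, i, _, hJ, _⟩ :=
    CochainComplex.Plus.modelCategoryQuillen.exists_quasiIso_injective L b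
  exact ⟨J, b, ‹_›, hJ, ⟨(asIso (Q.map i)).symm ≪≫ e.symm⟩⟩

end KInjective

section Products

variable {A : Type u} [Category.{v} A] {I : Type*}

/-- Products of complexes are computed degreewise. -/
noncomputable def evalPiIsLimit [HasZeroMorphisms A] [HasProductsOfShape I A] {ι : Type*}
    {c : ComplexShape ι} (K : I → HomologicalComplex A c) (m : ι) :
    IsLimit (Fan.mk ((∏ᶜ K).X m) fun i => (Pi.π K i).f m) :=
  isLimitMapConeFanMkEquiv (HomologicalComplex.eval A c m) _ _
    (isLimitOfPreserves (HomologicalComplex.eval A c m) (productIsProduct K))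

variable [Abelian A] [HasProductsOfShape I A]

lemma nonempty_homotopy_zero_of_pi {K : CochainComplex A ℤ} {J : I → CochainComplex A ℤ}
    {f : K ⟶ ∏ᶜ J} (h : ∀ i, Nonempty (Homotopy (f ≫ Pi.π J i) 0)) :
    Nonempty (Homotopy f 0) := by
  replace h i := (h i).some
  let s (p m : ℤ) : K.X p ⟶ (∏ᶜ J).X m :=
    Fan.IsLimit.lift (evalPiIsLimit J m) fun i => (h i).hom p m
  have hs (p m : ℤ) (i : I) : s p m ≫ (Pi.π J i).f m = (h i).hom p m :=
    Fan.IsLimit.fac (evalPiIsLimit J m) _ i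
  refine ⟨{ hom := s, zero := fun p m hpm => ?_, comm := fun m => ?_ }⟩
  · refine Fan.IsLimit.hom_ext (evalPiIsLimit J m) _ _ fun i => ?_
    simpa [hs] using (h i).zero p m hpm
  · refine Fan.IsLimit.hom_ext (evalPiIsLimit J m) _ _ fun i => ?_
    have comm := (h i).comm m
    simp only [dNext_eq _ (show (ComplexShape.up ℤ).Rel m (m + 1) by simp),
      prevD_eq _ (show (ComplexShape.up ℤ).Rel (m - 1) m by simp)] at comm ⊢
    rw [HomologicalComplex.comp_f] at comm
    simp only [Fan.mk_pt, fan_mk_proj, comm, Preadditive.add_comp, Category.assoc, hs,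
      ← HomologicalComplex.Hom.comm, reassoc_of% hs, HomologicalComplex.zero_f, zero_comp]

variable [HasDerivedCategory.{w} A] (J : I → CochainComplex A ℤ) [∀ i, (J i).IsKInjective]

instance isKInjective_pi : (∏ᶜ J : CochainComplex A ℤ).IsKInjective where
  nonempty_homotopy_zero _ hK := nonempty_homotopy_zero_of_pi fun _ =>
    CochainComplex.IsKInjective.nonempty_homotopy_zero _ hK

lemma exists_comp_Q_map_π_eq (Z : DerivedCategory A) (g : ∀ i, Z ⟶ Q.obj (J i)) :
    ∃ f : Z ⟶ Q.obj (∏ᶜ J), ∀ i, f ≫ Q.map (Pi.π J i) = g i := by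
  let e := Q.objObjPreimageIso Z
  choose g' hg' using fun i => exists_Q_map_eq (e.hom ≫ g i)
  refine ⟨e.inv ≫ Q.map (Pi.lift g'), fun i => ?_⟩
  rw [Category.assoc, ← Functor.map_comp, limit.lift_π]
  simp [hg']

variable {J} in
lemma eq_zero_of_comp_Q_map_π_eq_zero {Z : DerivedCategory A} {f : Z ⟶ Q.obj (∏ᶜ J)}
    (hf : ∀ i, f ≫ Q.map (Pi.π J i) = 0) : f = 0 := by
  let e := Q.objObjPreimageIso Z
  obtain ⟨f', hf'⟩ := exists_Q_map_eq (e.hom ≫ f)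
  rw [← cancel_epi e.hom, ← hf', comp_zero, Q_map_eq_zero_iff]
  refine nonempty_homotopy_zero_of_pi fun i => (Q_map_eq_zero_iff _).1 ?_
  rw [Functor.map_comp, hf', Category.assoc, hf, comp_zero]

instance preservesLimit_Q : PreservesLimit (Discrete.functor J) (Q (C := A)) :=
  preservesLimit_of_preserves_limit_cone (productIsProduct J) <|
    (isLimitMapConeFanMkEquiv Q _ _).symm <|
      Fan.IsLimit.mk _ (fun s => (exists_comp_Q_map_π_eq J s.pt s.proj).choose)
        (fun s => (exists_comp_Q_map_π_eq J s.pt s.proj).choose_spec) fun s m hm => by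
          rw [← sub_eq_zero]
          refine eq_zero_of_comp_Q_map_π_eq_zero fun i => ?_
          rw [Preadditive.sub_comp, sub_eq_zero]
          exact (hm i).trans ((exists_comp_Q_map_π_eq J s.pt s.proj).choose_spec i).symm

instance hasProduct_Q_obj : HasProduct fun i => Q.obj (J i) :=
  ⟨⟨⟨_, isLimitMapConeFanMkEquiv Q _ _ (isLimitOfPreserves Q (productIsProduct J))⟩⟩⟩

end Products

section AB4Star

variable {A : Type u} [Category.{v} A] [Abelian A]

lemma restriction_exactAt_succ_iff (J : CochainComplex A ℤ) (b : ℤ) (q : ℕ) :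
    (J.restriction (ComplexShape.embeddingUpIntGE b)).ExactAt (q + 1) ↔
      J.ExactAt (b + (q + 1)) := by
  rw [HomologicalComplex.exactAt_iff' _ q (q + 1) (q + 2) (by simp) (by simp),
    HomologicalComplex.exactAt_iff' _ (b + q) (b + (q + 1)) (b + (q + 2))
      (by rw [CochainComplex.prev]; lia) (by rw [CochainComplex.next]; lia)]
  exact ShortComplex.exact_iff_of_iso (HomologicalComplex.restriction.sc'Iso J
    (ComplexShape.embeddingUpIntGE b) q (q + 1) (q + 2) (by simp) (by simp) rfl
    (by rw [CochainComplex.prev]; lia) (by rw [CochainComplex.next]; lia))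

/-- A complex of injectives which is exact in positive degrees, as an injective resolution of its
degree-zero cocycles. -/
noncomputable def injectiveResolutionKernel (K : CochainComplex A ℕ)
    (hK : ∀ n, Injective (K.X n)) (hex : ∀ q, K.ExactAt (q + 1)) :
    InjectiveResolution (kernel (K.d 0 1)) where
  cocomplex := K
  injective := hK
  ι := (CochainComplex.fromSingle₀Equiv _ _).symm ⟨kernel.ι _, kernel.condition _⟩
  quasiIso := ⟨fun
    | 0 => by
      refine (CochainComplex.quasiIsoAt₀_iff _).2
        ((ShortComplex.quasiIso_iff_of_zeros _ rfl rfl (K.shape 0 0 (by simp))).2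
          ((ShortComplex.exact_and_mono_f_iff_of_iso ?_).2
            ⟨ShortComplex.exact_kernel (K.d 0 1), inferInstanceAs (Mono (kernel.ι (K.d 0 1)))⟩))
      exact ShortComplex.isoMk (Iso.refl _) (Iso.refl _) (Iso.refl _)
        ((Category.id_comp _).trans ((Category.comp_id _).trans
          (CochainComplex.fromSingle₀Equiv_symm_apply_f_zero _ _)).symm)
        ((Category.id_comp _).trans (Category.comp_id _).symm)
    | q + 1 => (quasiIsoAt_iff_exactAt _ _ (CochainComplex.exactAt_succ_single_obj _ _)).2 (hex q)⟩

/-- Restriction along an embedding of complex shapes preserves products of complexes. -/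
noncomputable def restrictionPiIsLimit {I : Type*} [HasProductsOfShape I A] {ι ι' : Type*}
    {c : ComplexShape ι} {c' : ComplexShape ι'} (J : I → HomologicalComplex A c')
    (e : c.Embedding c') [e.IsRelIff] :
    IsLimit (Fan.mk ((∏ᶜ J).restriction e) fun i =>
      HomologicalComplex.restrictionMap (Pi.π J i) e) :=
  HomologicalComplex.isLimitOfEval _ _ fun m =>
    (isLimitMapConeFanMkEquiv (HomologicalComplex.eval A c m) _ _).symm (evalPiIsLimit J (e.f m))

variable [HasProducts.{0} A]

lemma exactAt_pi {n : ℕ} (hA : AB4StarMinus A n) {I : Type}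
    {J : I → CochainComplex A ℤ} (hJ : ∀ i m, Injective ((J i).X m)) {b : ℤ}
    (hb : ∀ i m, b < m → (J i).ExactAt m) {m : ℤ} (hm : b + n < m) :
    (∏ᶜ J : CochainComplex A ℤ).ExactAt m := by
  obtain ⟨q, rfl⟩ : ∃ q : ℕ, m = b + (q + 1) := ⟨(m - b - 1).toNat, by lia⟩
  rw [← restriction_exactAt_succ_iff, HomologicalComplex.exactAt_iff_isZero_homology]
  let e := ComplexShape.embeddingUpIntGE b
  let R (i : I) := injectiveResolutionKernel ((J i).restriction e) (fun _ => hJ i _)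
    fun q => (restriction_exactAt_succ_iff _ b q).2 (hb i _ (by lia))
  let f : (∏ᶜ fun i => (R i).cocomplex) ≅ (∏ᶜ J).restriction e :=
    (productIsProduct _).conePointUniqueUpToIso (restrictionPiIsLimit J e)
  exact (hA I _ R (q + 1) (by lia)).of_iso
    ((HomologicalComplex.homologyFunctor A (ComplexShape.up ℕ) (q + 1)).mapIso f).symm

variable [HasDerivedCategory.{w} A] [EnoughInjectives A]

lemma hasProduct_of_plus {I : Type} {X : I → DerivedCategory A}
    (hX : ∀ i, TStructure.t.plus (X i)) : HasProduct X := by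
  choose J b _ _ e using fun i => exists_injective_iso_Q_obj (hX i)
  have (i : I) : (J i).IsKInjective := CochainComplex.isKInjective_of_injective (J i) (b i)
  exact hasLimit_of_iso (F := Discrete.functor fun i => Q.obj (J i))
    (Discrete.natIso fun i => (e i.as).some)

lemma isLE_pi {n : ℕ} (hA : AB4StarMinus A n) {I : Type} {X : I → DerivedCategory A}
    (hX : ∀ i, TStructure.t.plus (X i)) [HasProduct X] {b : ℤ} (hb : ∀ i, (X i).IsLE b) :
    (∏ᶜ X).IsLE (b + n) := by
  choose J b' _ hJ e using fun i => exists_injective_iso_Q_obj (hX i)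
  have (i : I) : (J i).IsKInjective := CochainComplex.isKInjective_of_injective (J i) (b' i)
  let f : Q.obj (∏ᶜ J) ≅ ∏ᶜ X := PreservesProduct.iso Q J ≪≫
    HasLimit.isoOfNatIso (Discrete.natIso fun i => (e i.as).some)
  suffices (Q.obj (∏ᶜ J)).IsLE (b + n) from TStructure.t.isLE_of_iso f _
  rw [isLE_Q_obj_iff, CochainComplex.isLE_iff]
  refine fun m => exactAt_pi hA hJ fun i m hm => ?_
  have : (Q.obj (J i)).IsLE b := TStructure.t.isLE_of_iso (e i).some.symm b
  rw [isLE_Q_obj_iff, CochainComplex.isLE_iff] at this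
  exact this m hm

end AB4Star

section ExactFunctor

variable {C : Type u} [Category.{v} C] [Abelian C] [HasDerivedCategory.{w} C]
  {M : Type u'} [Category.{v'} M] [Abelian M] [HasDerivedCategory.{w'} M]
  (F : C ⥤ M) [F.Additive] [PreservesFiniteLimits F] [PreservesFiniteColimits F]

/-- The comparison isomorphism `Hᵏ(F K) ≅ F (Hᵏ K)` for complexes and an exact functor `F`. -/
noncomputable def mapHomologicalComplexCompHomologyIso (k : ℤ) :
    F.mapHomologicalComplex (ComplexShape.up ℤ) ⋙
        HomologicalComplex.homologyFunctor M (ComplexShape.up ℤ) k ≅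
      HomologicalComplex.homologyFunctor C (ComplexShape.up ℤ) k ⋙ F :=
  NatIso.ofComponents (fun K => (K.sc k).mapHomologyIso F) fun f =>
    ShortComplex.mapHomologyIso_hom_naturality
      ((HomologicalComplex.shortComplexFunctor C (ComplexShape.up ℤ) k).map f) F

/-- The comparison isomorphism `Hᵏ(F X) ≅ F (Hᵏ X)` on derived categories for an exact
functor `F`. -/
noncomputable def mapDerivedCategoryCompHomologyIso (k : ℤ) :
    F.mapDerivedCategory ⋙ homologyFunctor M k ≅ homologyFunctor C k ⋙ F :=
  Localization.liftNatIso Q (HomologicalComplex.quasiIso C (ComplexShape.up ℤ))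
    (Q ⋙ F.mapDerivedCategory ⋙ homologyFunctor M k) (Q ⋙ homologyFunctor C k ⋙ F) _ _ <|
    (Functor.associator _ _ _).symm ≪≫
      Functor.isoWhiskerRight F.mapDerivedCategoryFactors _ ≪≫ Functor.associator _ _ _ ≪≫
      Functor.isoWhiskerLeft _ (homologyFunctorFactors M k) ≪≫
      mapHomologicalComplexCompHomologyIso F k ≪≫
      (Functor.isoWhiskerRight (homologyFunctorFactors C k) F).symm ≪≫ Functor.associator _ _ _

variable {F}

lemma isIso_homologyMap_map_iff [F.ReflectsIsomorphisms] {X Y : DerivedCategory C} (f : X ⟶ Y)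
    (k : ℤ) : IsIso ((homologyFunctor M k).map (F.mapDerivedCategory.map f)) ↔
      IsIso ((homologyFunctor C k).map f) :=
  (NatIso.isIso_map_iff (mapDerivedCategoryCompHomologyIso F k) f).trans
    (isIso_iff_of_reflects_iso _ F)

instance [F.ReflectsIsomorphisms] : F.mapDerivedCategory.ReflectsIsomorphisms where
  reflects f _ := (DerivedCategory.isIso_iff C f).2 fun k =>
    (isIso_homologyMap_map_iff (F := F) f k).1 inferInstance

instance isGE_map (X : DerivedCategory C) (b : ℤ) [X.IsGE b] :
    (F.mapDerivedCategory.obj X).IsGE b :=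
  (isGE_iff _ b).2 fun i hi => (F.map_isZero (isZero_of_isGE X b i hi)).of_iso
    ((mapDerivedCategoryCompHomologyIso F i).app X)

instance isLE_map (X : DerivedCategory C) (b : ℤ) [X.IsLE b] :
    (F.mapDerivedCategory.obj X).IsLE b :=
  (isLE_iff _ b).2 fun i hi => (F.map_isZero (isZero_of_isLE X b i hi)).of_iso
    ((mapDerivedCategoryCompHomologyIso F i).app X)

end ExactFunctor

section Couniversal

lemma bijective_shiftFunctor_map {C : Type u} [Category.{v} C] [HasShift C ℤ] (i : ℤ) (X Y : C) :
    Function.Bijective ((shiftFunctor C i).map : (X ⟶ Y) → _) :=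
  (Functor.FullyFaithful.ofFullyFaithful _).map_bijective _ _

variable {C : Type u} [Category.{v} C] [Preadditive C] {M : Type u'} [Category.{v'} M]
  [Preadditive M] (Φ : C ⥤ M) [Φ.Additive] {X : C} {Y : M} (ε : Φ.obj X ⟶ Y)

/-- The map `Hom(Z, X) → Hom(Φ Z, Y)` induced by a morphism `ε : Φ X ⟶ Y`. -/
def transpose (Z : C) : (Z ⟶ X) →+ (Φ.obj Z ⟶ Y) :=
  (Preadditive.rightComp (Φ.obj Z) ε).comp Φ.mapAddHom

/-- A morphism `ε : Φ X ⟶ Y` is couniversal if it is a terminal object of `CostructuredArrow Φ Y`,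
that is, if it exhibits `X` as the value at `Y` of a partial right adjoint of `Φ`. In particular
`𝟙 (Φ X)` is couniversal if and only if `Φ` is bijective on morphisms to `X`. -/
def IsCouniversal : Prop := ∀ Z, Function.Bijective (transpose Φ ε Z)

variable {Φ}

lemma transpose_apply {Z : C} (f : Z ⟶ X) : transpose Φ ε Z f = Φ.map f ≫ ε := rfl

lemma IsCouniversal.bijective_map (h : IsCouniversal Φ (𝟙 (Φ.obj X))) (Z : C) :
    Function.Bijective fun f : Z ⟶ X => Φ.map f := by
  convert h Z with f
  rw [transpose_apply, Category.comp_id]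

lemma rightComp_comp_transpose {ε : Φ.obj X ⟶ Y} {X' : C} {Y' : M} {ε' : Φ.obj X' ⟶ Y'}
    {f : X ⟶ X'} {g : Y ⟶ Y'} (h : Φ.map f ≫ ε' = ε ≫ g) (Z : C) :
    (Preadditive.rightComp (Φ.obj Z) g).comp (transpose Φ ε Z) =
      (transpose Φ ε' Z).comp (Preadditive.rightComp Z f) := by
  ext p
  change (Φ.map p ≫ ε) ≫ g = Φ.map (p ≫ f) ≫ ε'
  rw [Category.assoc, Functor.map_comp, Category.assoc, h]

variable {ε}

lemma transpose_bijective_iff_of_iso {Z Z' : C} (e : Z ≅ Z') :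
    Function.Bijective (transpose Φ ε Z) ↔ Function.Bijective (transpose Φ ε Z') := by
  have comm : transpose Φ ε Z ∘ e.symm.homFromEquiv =
      (Φ.mapIso e.symm).homFromEquiv ∘ transpose Φ ε Z' := by
    ext f
    simp [transpose_apply]
  rw [← Function.Bijective.of_comp_iff _ e.symm.homFromEquiv.bijective, comm,
    Function.Bijective.of_comp_iff' (Equiv.bijective _)]

lemma IsCouniversal.eq_zero (h : IsCouniversal Φ ε) {Z : C} {f : Z ⟶ X} (hf : Φ.map f ≫ ε = 0) :
    f = 0 :=
  (injective_iff_map_eq_zero _).1 (h Z).1 f hf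

lemma IsCouniversal.comp_iso (h : IsCouniversal Φ ε) {Y' : M} (e : Y ≅ Y') :
    IsCouniversal Φ (ε ≫ e.hom) := fun Z => by
  have : transpose Φ (ε ≫ e.hom) Z = e.homToEquiv ∘ transpose Φ ε Z := by
    ext f
    simp [transpose_apply]
  rw [this]
  exact e.homToEquiv.bijective.comp (h Z)

lemma IsCouniversal.iso_comp (h : IsCouniversal Φ ε) {X' : C} (e : X' ≅ X) :
    IsCouniversal Φ (Φ.map e.hom ≫ ε) := fun Z => by
  have : transpose Φ (Φ.map e.hom ≫ ε) Z = transpose Φ ε Z ∘ e.homToEquiv := by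
    ext f
    simp [transpose_apply]
  rw [this]
  exact (h Z).comp e.homToEquiv.bijective

variable [HasShift C ℤ] [HasShift M ℤ] [Φ.CommShift ℤ]

lemma transpose_shift_bijective_iff (i : ℤ) (Z : C) :
    Function.Bijective (transpose Φ ((Φ.commShiftIso i).hom.app X ≫ ε⟦i⟧') (Z⟦i⟧)) ↔
      Function.Bijective (transpose Φ ε Z) := by
  have comm : transpose Φ ((Φ.commShiftIso i).hom.app X ≫ ε⟦i⟧') (Z⟦i⟧) ∘ (shiftFunctor C i).map =
      ((Φ.commShiftIso i).app Z).symm.homFromEquiv ∘ (shiftFunctor M i).map ∘ transpose Φ ε Z := by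
    ext f
    have := (Φ.commShiftIso i).hom.naturality_assoc f (ε⟦i⟧')
    dsimp only [Functor.comp_obj, Functor.comp_map] at this
    simp [transpose_apply, this]
  rw [← Function.Bijective.of_comp_iff _ (bijective_shiftFunctor_map i _ _), comm,
    Function.Bijective.of_comp_iff' (Equiv.bijective _),
    Function.Bijective.of_comp_iff' (bijective_shiftFunctor_map i _ _)]

lemma isCouniversal_shift_iff (i : ℤ) :
    IsCouniversal Φ ((Φ.commShiftIso i).hom.app X ≫ ε⟦i⟧') ↔ IsCouniversal Φ ε :=
  ⟨fun h Z => (transpose_shift_bijective_iff i Z).1 (h _), fun h Z =>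
    (transpose_bijective_iff_of_iso (shiftNegShift Z i)).1
      ((transpose_shift_bijective_iff i _).2 (h _))⟩

lemma map_neg_shift_comp [∀ k : ℤ, (shiftFunctor C k).Additive]
    [∀ k : ℤ, (shiftFunctor M k).Additive] {X' : C} {Y' : M} {ε' : Φ.obj X' ⟶ Y'}
    {f : X ⟶ X'} {g : Y ⟶ Y'} (h : Φ.map f ≫ ε' = ε ≫ g) :
    Φ.map (-f⟦(1 : ℤ)⟧') ≫ (Φ.commShiftIso (1 : ℤ)).hom.app _ ≫ ε'⟦1⟧' =
      ((Φ.commShiftIso (1 : ℤ)).hom.app _ ≫ ε⟦1⟧') ≫ (-g⟦1⟧') := by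
  simp [← Functor.map_comp, ← h]

variable [HasZeroObject C] [∀ k : ℤ, (shiftFunctor C k).Additive] [Pretriangulated C]
  [HasZeroObject M] [∀ k : ℤ, (shiftFunctor M k).Additive] [Pretriangulated M]

lemma exact_rightComp_mor {T : Triangle C} (hT : T ∈ distTriang C) (Z : C) :
    Function.Exact (Preadditive.rightComp Z T.mor₁) (Preadditive.rightComp Z T.mor₂) := fun f =>
  ⟨fun hf => (Triangle.coyoneda_exact₂ T hT f hf).imp fun _ h => h.symm, by
    rintro ⟨g, rfl⟩
    exact (Category.assoc _ _ _).trans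
      ((congrArg (g ≫ ·) (comp_distTriang_mor_zero₁₂ T hT)).trans comp_zero)⟩

variable {T : Triangle C} {T' : Triangle M} {ε₁ : Φ.obj T.obj₁ ⟶ T'.obj₁}
  {ε₂ : Φ.obj T.obj₂ ⟶ T'.obj₂} {ε₃ : Φ.obj T.obj₃ ⟶ T'.obj₃}

lemma IsCouniversal.of_triangle₃ (hT : T ∈ distTriang C) (hT' : T' ∈ distTriang M)
    (comm₁ : Φ.map T.mor₁ ≫ ε₂ = ε₁ ≫ T'.mor₁) (comm₂ : Φ.map T.mor₂ ≫ ε₃ = ε₂ ≫ T'.mor₂)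
    (comm₃ : Φ.map T.mor₃ ≫ (Φ.commShiftIso (1 : ℤ)).hom.app _ ≫ ε₁⟦1⟧' = ε₃ ≫ T'.mor₃)
    (h₁ : IsCouniversal Φ ε₁) (h₂ : IsCouniversal Φ ε₂) :
    IsCouniversal Φ ε₃ := fun Z => by
  have hr := rot_of_distTriang T hT
  have hr' := rot_of_distTriang T' hT'
  have comm₄ := map_neg_shift_comp comm₁
  refine AddMonoidHom.bijective_of_surjective_of_bijective_of_bijective_of_injective
    (Preadditive.rightComp Z T.mor₁) (Preadditive.rightComp Z T.mor₂)
    (Preadditive.rightComp Z T.mor₃) (Preadditive.rightComp Z (-T.mor₁⟦1⟧'))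
    (Preadditive.rightComp (Φ.obj Z) T'.mor₁) (Preadditive.rightComp (Φ.obj Z) T'.mor₂)
    (Preadditive.rightComp (Φ.obj Z) T'.mor₃) (Preadditive.rightComp (Φ.obj Z) (-T'.mor₁⟦1⟧'))
    (transpose Φ ε₁ Z) (transpose Φ ε₂ Z) (transpose Φ ε₃ Z) (transpose Φ _ Z) (transpose Φ _ Z)
    (rightComp_comp_transpose comm₁ Z) (rightComp_comp_transpose comm₂ Z)
    (rightComp_comp_transpose comm₃ Z) (rightComp_comp_transpose comm₄ Z)
    (exact_rightComp_mor hT Z) (exact_rightComp_mor hr Z)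
    (exact_rightComp_mor (rot_of_distTriang _ hr) Z) (exact_rightComp_mor hT' _)
    (exact_rightComp_mor hr' _) (exact_rightComp_mor (rot_of_distTriang _ hr') _)
    (h₁ Z).surjective (h₂ Z) ((isCouniversal_shift_iff 1).2 h₁ Z)
    ((isCouniversal_shift_iff 1).2 h₂ Z).injective

lemma IsCouniversal.of_triangle₁ (hT : T ∈ distTriang C) (hT' : T' ∈ distTriang M)
    (comm₁ : Φ.map T.mor₁ ≫ ε₂ = ε₁ ≫ T'.mor₁) (comm₂ : Φ.map T.mor₂ ≫ ε₃ = ε₂ ≫ T'.mor₂)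
    (comm₃ : Φ.map T.mor₃ ≫ (Φ.commShiftIso (1 : ℤ)).hom.app _ ≫ ε₁⟦1⟧' = ε₃ ≫ T'.mor₃)
    (h₂ : IsCouniversal Φ ε₂) (h₃ : IsCouniversal Φ ε₃) :
    IsCouniversal Φ ε₁ := by
  rw [← isCouniversal_shift_iff 1]
  exact IsCouniversal.of_triangle₃ (rot_of_distTriang T hT) (rot_of_distTriang T' hT') comm₂
    comm₃ (map_neg_shift_comp comm₁) h₂ h₃

end Couniversal

section RightAdjoint

/-- The adjunction between categories of complexes induced degreewise by `F ⊣ G`. -/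
def mapHomologicalComplexAdjunction {C : Type u} [Category.{v} C] [HasZeroMorphisms C]
    {M : Type u'} [Category.{v'} M] [HasZeroMorphisms M] {F : C ⥤ M} [F.PreservesZeroMorphisms]
    {G : M ⥤ C} [G.PreservesZeroMorphisms] (adj : F ⊣ G) {ι : Type*} (c : ComplexShape ι) :
    F.mapHomologicalComplex c ⊣ G.mapHomologicalComplex c :=
  Adjunction.mkOfUnitCounit
    { unit :=
        { app K := { f i := adj.unit.app (K.X i), comm' _ _ _ := (adj.unit.naturality _).symm }
          naturality _ _ f := HomologicalComplex.hom_ext _ _ fun i => adj.unit.naturality (f.f i) }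
      counit :=
        { app J := { f i := adj.counit.app (J.X i), comm' _ _ _ := (adj.counit.naturality _).symm }
          naturality _ _ f :=
            HomologicalComplex.hom_ext _ _ fun i => adj.counit.naturality (f.f i) }
      left_triangle := by
        ext K i
        exact (congrArg (F.map _ ≫ ·) (Category.id_comp _)).trans
          (adj.left_triangle_components (K.X i))
      right_triangle := by
        ext J i
        exact (congrArg (_ ≫ ·) (Category.id_comp _)).trans
          (adj.right_triangle_components (J.X i)) }

section Complexes

variable {C : Type u} [Category.{v} C] [Abelian C] {M : Type u'} [Category.{v'} M] [Abelian M]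
  {F : C ⥤ M} [F.Additive] {G : M ⥤ C} [G.Additive] (adj : F ⊣ G)

lemma nonempty_homotopy_zero_of_homEquiv_symm {K : CochainComplex C ℤ} {J : CochainComplex M ℤ}
    {f : K ⟶ (G.mapHomologicalComplex _).obj J}
    (h : Nonempty (Homotopy (((mapHomologicalComplexAdjunction adj _).homEquiv K J).symm f) 0)) :
    Nonempty (Homotopy f 0) := by
  obtain ⟨h⟩ := h
  let adj' := mapHomologicalComplexAdjunction adj (ComplexShape.up ℤ)
  have hf : f = adj'.unit.app K ≫ (G.mapHomologicalComplex _).map ((adj'.homEquiv K J).symm f) :=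
    ((adj'.homEquiv K J).apply_symm_apply f).symm.trans (adj'.homEquiv_unit _ _ _)
  exact ⟨(Homotopy.ofEq hf).trans (((G.mapHomotopy h).compLeft _).trans
    (Homotopy.ofEq (by rw [Functor.map_zero, comp_zero])))⟩

variable [PreservesFiniteLimits F] [PreservesFiniteColimits F]
  [HasDerivedCategory.{w} C] [HasDerivedCategory.{w'} M]

/-- The counit `F (G J) ⟶ J` in the derived category. If `J` is a K-injective complex, then so is
`G J`, which computes the value at `J` of the right derived functor of `G`. -/
noncomputable def derivedCounit (J : CochainComplex M ℤ) :
    F.mapDerivedCategory.obj (Q.obj ((G.mapHomologicalComplex _).obj J)) ⟶ Q.obj J :=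
  F.mapDerivedCategoryFactors.hom.app _ ≫
    Q.map ((mapHomologicalComplexAdjunction adj _).counit.app J)

lemma map_Q_map_comp_derivedCounit {K : CochainComplex C ℤ} {J : CochainComplex M ℤ}
    (f : K ⟶ (G.mapHomologicalComplex _).obj J) :
    F.mapDerivedCategory.map (Q.map f) ≫ derivedCounit adj J =
      F.mapDerivedCategoryFactors.hom.app K ≫
        Q.map (((mapHomologicalComplexAdjunction adj _).homEquiv K J).symm f) := by
  rw [derivedCounit, F.mapDerivedCategoryFactors_hom_naturality_assoc, ← Functor.map_comp,
    Adjunction.homEquiv_counit]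

lemma isCouniversal_derivedCounit (J : CochainComplex M ℤ) [J.IsKInjective]
    [CochainComplex.IsKInjective ((G.mapHomologicalComplex _).obj J)] :
    IsCouniversal F.mapDerivedCategory (derivedCounit adj J) := fun Z => by
  rw [← transpose_bijective_iff_of_iso (Q.objObjPreimageIso Z)]
  refine ⟨(injective_iff_map_eq_zero _).2 fun f hf => ?_, fun g => ?_⟩
  · obtain ⟨f, rfl⟩ := exists_Q_map_eq f
    rw [transpose_apply, map_Q_map_comp_derivedCounit, Preadditive.IsIso.comp_left_eq_zero,
      Q_map_eq_zero_iff] at hf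
    obtain ⟨h⟩ := nonempty_homotopy_zero_of_homEquiv_symm adj hf
    exact Q_map_eq_zero_of_homotopy h
  · obtain ⟨g', hg'⟩ := exists_Q_map_eq (F.mapDerivedCategoryFactors.inv.app _ ≫ g)
    refine ⟨Q.map ((mapHomologicalComplexAdjunction adj _).homEquiv _ _ g'), ?_⟩
    rw [transpose_apply, map_Q_map_comp_derivedCounit, Equiv.symm_apply_apply, hg',
      Iso.hom_inv_id_app_assoc]

end Complexes

variable {C : Type u} [Category.{v} C] [Abelian C] [HasDerivedCategory.{w} C]
  {M : Type u'} [Category.{v'} M] [Abelian M] [HasDerivedCategory.{w'} M]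
  {F : C ⥤ M} [F.Additive] [PreservesFiniteLimits F] [PreservesFiniteColimits F]

lemma exists_isCouniversal [EnoughInjectives M] {G : M ⥤ C} (adj : F ⊣ G)
    {Y : DerivedCategory M} (hY : TStructure.t.plus Y) :
    ∃ (X : DerivedCategory C) (ε : F.mapDerivedCategory.obj X ⟶ Y),
      IsCouniversal F.mapDerivedCategory ε := by
  have := adj.right_adjoint_additive
  obtain ⟨J, b, _, hJ, ⟨e⟩⟩ := exists_injective_iso_Q_obj hY
  have := CochainComplex.isKInjective_of_injective J b
  have (n : ℤ) : Injective (((G.mapHomologicalComplex (ComplexShape.up ℤ)).obj J).X n) :=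
    adj.map_injective _ (hJ n)
  have := CochainComplex.isKInjective_of_injective
    ((G.mapHomologicalComplex (ComplexShape.up ℤ)).obj J) b
  exact ⟨_, _, (isCouniversal_derivedCounit adj J).comp_iso e⟩

lemma IsCouniversal.isGE {X : DerivedCategory C} {Y : DerivedCategory M}
    {ε : F.mapDerivedCategory.obj X ⟶ Y} (h : IsCouniversal F.mapDerivedCategory ε) (b : ℤ)
    [Y.IsGE b] : X.IsGE b := by
  refine (TStructure.t.isGE_iff_orthogonal (b - 1) b (by lia) X).2 fun Z f _ => h.eq_zero ?_
  exact TStructure.t.zero_of_isLE_of_isGE _ (b - 1) b (by lia) inferInstance inferInstance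

end RightAdjoint

lemma eq_zero_of_comp_shift_map_eq_zero {C : Type u} [Category.{v} C] [Preadditive C]
    [HasShift C ℤ] [∀ k : ℤ, (shiftFunctor C k).Additive] {X Y Z : C} {g : X ⟶ Y} {i : ℤ}
    (hg : ∀ f : Z⟦-i⟧ ⟶ X, f ≫ g = 0 → f = 0) {f : Z ⟶ X⟦i⟧} (hf : f ≫ g⟦i⟧' = 0) : f = 0 := by
  obtain ⟨f', hf'⟩ := (shiftFunctor C i).map_surjective ((shiftNegShift Z i).hom ≫ f)
  have h : f' ≫ g = 0 := (shiftFunctor C i).map_injective <| by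
    rw [Functor.map_comp, hf', Category.assoc, hf, comp_zero, Functor.map_zero]
  rwa [hg f' h, Functor.map_zero, eq_comm, Preadditive.IsIso.comp_left_eq_zero] at hf'

section Homology

variable {A : Type u} [Category.{v} A] [Abelian A] [HasDerivedCategory.{w} A]

lemma isIso_homologyMap_hom₁ {T T' : Triangle (DerivedCategory A)} (hT : T ∈ distTriang _)
    (hT' : T' ∈ distTriang _) (φ : T ⟶ T') {m₀ m₁ : ℤ} (hm : m₀ + 1 = m₁)
    (h₂ : Epi ((homologyFunctor A m₀).map φ.hom₂)) (h₃ : IsIso ((homologyFunctor A m₀).map φ.hom₃))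
    (h₂' : IsIso ((homologyFunctor A m₁).map φ.hom₂))
    (h₃' : Mono ((homologyFunctor A m₁).map φ.hom₃)) :
    IsIso ((homologyFunctor A m₁).map φ.hom₁) := by
  have comm₁ (m : ℤ) := (homologyFunctor A m).congr_map φ.comm₁
  have comm₂ (m : ℤ) := (homologyFunctor A m).congr_map φ.comm₂
  simp only [Functor.map_comp] at comm₁ comm₂
  exact Abelian.isIso_of_epi_of_isIso_of_isIso_of_mono
    ((homologyFunctor A 0).homologySequenceComposableArrows₅_exact T hT m₀ m₁ hm).δ₀
    ((homologyFunctor A 0).homologySequenceComposableArrows₅_exact T' hT' m₀ m₁ hm).δ₀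
    (ComposableArrows.homMk₄ ((homologyFunctor A m₀).map φ.hom₂) ((homologyFunctor A m₀).map φ.hom₃)
      ((homologyFunctor A m₁).map φ.hom₁) ((homologyFunctor A m₁).map φ.hom₂)
      ((homologyFunctor A m₁).map φ.hom₃) (comm₂ m₀)
      ((homologyFunctor A 0).homologySequenceδ_naturality T T' φ m₀ m₁ hm).symm
      (comm₁ m₁) (comm₂ m₁)) h₂ h₃ h₂' h₃'

lemma isIso_homologyMap_hom₂ {T T' : Triangle (DerivedCategory A)} (hT : T ∈ distTriang _)
    (hT' : T' ∈ distTriang _) (φ : T ⟶ T') [IsIso φ.hom₁] {m₀ m₁ : ℤ} (hm : m₀ + 1 = m₁)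
    (h₃ : Epi ((homologyFunctor A m₀).map φ.hom₃))
    (h₃' : IsIso ((homologyFunctor A m₁).map φ.hom₃)) :
    IsIso ((homologyFunctor A m₁).map φ.hom₂) :=
  have h₁ : IsIso ((homologyFunctor A m₀).map (φ.hom₁⟦(1 : ℤ)⟧')) := inferInstance
  have h₁' : Mono ((homologyFunctor A m₁).map (φ.hom₁⟦(1 : ℤ)⟧')) := inferInstance
  isIso_homologyMap_hom₁ (rot_of_distTriang _ hT) (rot_of_distTriang _ hT')
    ((rotate (DerivedCategory A)).map φ) hm h₃ h₁ h₃' h₁'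

lemma isIso_homologyMap_mor₁ {T : Triangle (DerivedCategory A)} (hT : T ∈ distTriang _) {b m : ℤ}
    [T.obj₃.IsGE b] (hm : m < b) : IsIso ((homologyFunctor A m).map T.mor₁) := by
  have := (HomologySequence.mono_homologyMap_mor₁_iff T hT (m - 1) m (by lia)).2
    ((isZero_of_isGE T.obj₃ b (m - 1) (by lia)).eq_of_src _ _)
  have := (HomologySequence.epi_homologyMap_mor₁_iff T hT m).2
    ((isZero_of_isGE T.obj₃ b m hm).eq_of_tgt _ _)
  exact isIso_of_mono_of_epi _

lemma isIso_homologyMap_mor₂ {T : Triangle (DerivedCategory A)} (hT : T ∈ distTriang _) {b m : ℤ}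
    [T.obj₁.IsLE b] (hm : b < m) : IsIso ((homologyFunctor A m).map T.mor₂) := by
  have := (HomologySequence.mono_homologyMap_mor₂_iff T hT m).2
    ((isZero_of_isLE T.obj₁ b m hm).eq_of_src _ _)
  have := (HomologySequence.epi_homologyMap_mor₂_iff T hT m (m + 1) rfl).2
    ((isZero_of_isLE T.obj₁ b (m + 1) (by lia)).eq_of_tgt _ _)
  exact isIso_of_mono_of_epi _

lemma exists_triangle_of_isGE (Y : DerivedCategory A) (b : ℤ) [Y.IsGE b] :
    ∃ (S B : DerivedCategory A) (f : S ⟶ Y) (g : Y ⟶ B) (h : B ⟶ S⟦(1 : ℤ)⟧),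
      S.IsGE b ∧ S.IsLE b ∧ B.IsGE (b + 1) ∧ Triangle.mk f g h ∈ distTriang _ := by
  obtain ⟨S, B, hS, hB, f, g, h, hT⟩ := TStructure.t.exists_triangle Y b (b + 1) rfl
  have : B.IsGE (b + 1) := ⟨hB⟩
  have hB' : B.IsGE (b - 1) := TStructure.t.isGE_of_ge B (b - 1) (b + 1)
  have hS' : S.IsGE b := TStructure.t.isGE₂ _ (inv_rot_of_distTriang _ hT) b
    (TStructure.t.isGE_shift B (b - 1) (-1) b) ‹Y.IsGE b›
  exact ⟨S, B, f, g, h, hS', ⟨hS⟩, ⟨hB⟩, hT⟩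

lemma isZero_of_forall_isGE {N : DerivedCategory A} {b : ℤ} (h : ∀ i, b ≤ i → N.IsGE i) :
    IsZero N := by
  have : IsIso (0 : N ⟶ N) := (DerivedCategory.isIso_iff A _).2 fun n =>
    have := h (max b (n + 1)) (le_max_left _ _)
    have hn := isZero_of_isGE N (max b (n + 1)) n (by lia)
    ⟨0, hn.eq_of_src _ _, hn.eq_of_src _ _⟩
  exact (IsZero.iff_isSplitMono_eq_zero (0 : N ⟶ N)).2 rfl

lemma isZero_of_hom_eq_zero {N : DerivedCategory A} (hN : TStructure.t.plus N)
    (h : ∀ (i : ℤ) (S : DerivedCategory A) [S.IsGE i] [S.IsLE i] (f : S ⟶ N), f = 0) :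
    IsZero N := by
  obtain ⟨b, hb⟩ := hN
  refine isZero_of_forall_isGE (b := b) fun i hi => ?_
  induction i, hi using Int.leInduction with
  | base => exact hb
  | succ i _ _ =>
    obtain ⟨S, B, f, g, δ, _, _, _, hT⟩ := exists_triangle_of_isGE N i
    have : Mono g := (Triangle.mor₁_eq_zero_iff_mono₂ _ hT).1 (h i S f)
    refine (TStructure.t.isGE_iff_orthogonal i (i + 1) rfl N).2 fun Z z _ => ?_
    rw [← cancel_mono g, zero_comp]
    exact TStructure.t.zero _ i (i + 1)

lemma isIso_of_bijective_comp {X₁ X₂ : DerivedCategory A} (hX₁ : TStructure.t.plus X₁)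
    (hX₂ : TStructure.t.plus X₂) (η : X₁ ⟶ X₂)
    (h : ∀ (i : ℤ) (S : DerivedCategory A) [S.IsGE i] [S.IsLE i],
      Function.Bijective (Preadditive.rightComp S η)) : IsIso η := by
  obtain ⟨N, g, δ, hT⟩ := distinguished_cocone_triangle η
  have hN := TStructure.t.plus.ext_of_isTriangulatedClosed₃ _ hT hX₁ hX₂
  refine (Triangle.isZero₃_iff_isIso₁ _ hT).1 (isZero_of_hom_eq_zero hN fun i S _ _ f => ?_)
  have hδ : f ≫ δ = 0 := by
    have : (S⟦(-1 : ℤ)⟧).IsGE (i + 1) := TStructure.t.isGE_shift S i (-1) (i + 1)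
    have : (S⟦(-1 : ℤ)⟧).IsLE (i + 1) := TStructure.t.isLE_shift S i (-1) (i + 1)
    exact eq_zero_of_comp_shift_map_eq_zero
      ((injective_iff_map_eq_zero _).1 (h (i + 1) (S⟦(-1 : ℤ)⟧)).injective)
      ((Category.assoc _ _ _).trans
        ((congrArg (f ≫ ·) (comp_distTriang_mor_zero₃₁ _ hT)).trans comp_zero))
  obtain ⟨x, rfl⟩ : ∃ x : S ⟶ X₂, f = x ≫ g := Triangle.coyoneda_exact₃ _ hT f hδ
  obtain ⟨y, rfl⟩ := (h i S).2 x
  have hηg : η ≫ g = 0 := comp_distTriang_mor_zero₁₂ _ hT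
  exact (Category.assoc _ _ _).trans ((congrArg (y ≫ ·) hηg).trans comp_zero)

lemma nonempty_iso_single_shift_neg (S : DerivedCategory A) (i : ℤ) [S.IsGE i] [S.IsLE i] :
    Nonempty (S ≅ ((singleFunctor A 0).obj ((homologyFunctor A i).obj S))⟦-i⟧) := by
  obtain ⟨a, ⟨e⟩⟩ := exists_iso_singleFunctor_obj_of_isGE_of_isLE S i
  let e' : a ≅ (homologyFunctor A i).obj S :=
    ((singleFunctorCompHomologyFunctorIso A i).app a).symm ≪≫ (homologyFunctor A i).mapIso e.symm
  exact ⟨e ≪≫ (((singleFunctors A).shiftIso (-i) i 0 (by simp)).app a).symm ≪≫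
    (shiftFunctor _ (-i)).mapIso ((singleFunctor A 0).mapIso e')⟩

end Homology

section EssImage

variable {C : Type u} [Category.{v} C] [Preadditive C] [HasZeroObject C]
  {M : Type u'} [Category.{v'} M] [Abelian M] [HasDerivedCategory.{w'} M]
  {F : C ⥤ M} [F.Additive]

lemma essImage_homology_of_distTriang {T : Triangle (DerivedCategory M)} (hT : T ∈ distTriang _)
    {b : ℤ} [T.obj₁.IsLE b] [T.obj₃.IsGE (b + 1)]
    (h : ∀ k, F.essImage ((homologyFunctor M k).obj T.obj₂)) :
    (∀ k, F.essImage ((homologyFunctor M k).obj T.obj₁)) ∧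
      ∀ k, F.essImage ((homologyFunctor M k).obj T.obj₃) := by
  have of_isZero {Z : M} (hZ : IsZero Z) : F.essImage Z :=
    ⟨_, ⟨(F.map_isZero (isZero_zero C)).iso hZ⟩⟩
  refine ⟨fun k => ?_, fun k => ?_⟩ <;> obtain hk | hk := le_or_gt k b
  · have := isIso_homologyMap_mor₁ hT (Int.lt_add_one_of_le hk)
    exact F.essImage.prop_of_iso (asIso ((homologyFunctor M k).map T.mor₁)).symm (h k)
  · exact of_isZero (isZero_of_isLE T.obj₁ b k hk)
  · exact of_isZero (isZero_of_isGE T.obj₃ (b + 1) k (Int.lt_add_one_of_le hk))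
  · have := isIso_homologyMap_mor₂ hT hk
    exact F.essImage.prop_of_iso (asIso ((homologyFunctor M k).map T.mor₂)) (h k)

end EssImage

section Devissage

variable {C : Type u} [Category.{v} C] [Abelian C] [HasDerivedCategory.{w} C]
  {M : Type u'} [Category.{v'} M] [Abelian M] [HasDerivedCategory.{w'} M]
  {F : C ⥤ M} [F.Additive] [PreservesFiniteLimits F] [PreservesFiniteColimits F]

lemma bijective_transpose_id_single (hF : IsStrongSerre F) (b : C) (i : ℤ) {S : DerivedCategory C}
    [S.IsGE i] [S.IsLE i] : Function.Bijective
      (transpose F.mapDerivedCategory (𝟙 (F.mapDerivedCategory.obj ((singleFunctor C 0).obj b)))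
        S) := by
  obtain hi | hi := lt_or_ge i 0
  · have hS (f g : S ⟶ (singleFunctor C 0).obj b) : f = g :=
      (TStructure.t.zero f i 0).trans (TStructure.t.zero g i 0).symm
    exact ⟨fun f g _ => hS f g, fun g => ⟨0, (map_zero _).trans (TStructure.t.zero g i 0).symm⟩⟩
  · obtain ⟨i, rfl⟩ := Int.eq_ofNat_of_zero_le hi
    obtain ⟨e⟩ := nonempty_iso_single_shift_neg S i
    rw [transpose_bijective_iff_of_iso e, ← transpose_shift_bijective_iff (i : ℤ),
      transpose_bijective_iff_of_iso (shiftNegShift _ (i : ℤ))]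
    exact ((F.mapDerivedCategory.commShiftIso (i : ℤ)).app _ ≪≫
      (shiftFunctor _ (i : ℤ)).mapIso (Iso.refl _)).homToEquiv.bijective.comp (hF _ b i)

lemma isCouniversal_id_single [EnoughInjectives M] {G : M ⥤ C} (adj : F ⊣ G)
    (hF : IsStrongSerre F) (b : C) : IsCouniversal F.mapDerivedCategory
      (𝟙 (F.mapDerivedCategory.obj ((singleFunctor C 0).obj b))) := by
  obtain ⟨X, ε, hε⟩ := exists_isCouniversal adj
    (Y := F.mapDerivedCategory.obj ((singleFunctor C 0).obj b)) ⟨0, inferInstance⟩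
  obtain ⟨η, hη : F.mapDerivedCategory.map η ≫ ε = 𝟙 _⟩ := (hε _).2 (𝟙 _)
  have : IsIso η := by
    refine isIso_of_bijective_comp ⟨0, inferInstance⟩ ⟨0, hε.isGE 0⟩ η fun i S _ _ => ?_
    have comm : transpose F.mapDerivedCategory ε S ∘ Preadditive.rightComp S η =
        transpose F.mapDerivedCategory (𝟙 _) S := by
      ext f
      change F.mapDerivedCategory.map (f ≫ η) ≫ ε = F.mapDerivedCategory.map f ≫ 𝟙 _
      rw [Functor.map_comp, Category.assoc, hη]
    rw [← Function.Bijective.of_comp_iff' (hε S), comm]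
    exact bijective_transpose_id_single hF b i
  rw [← hη]
  exact hε.iso_comp (asIso η)

lemma exists_iso_isCouniversal_of_isGE_of_isLE (h : ∀ a, IsCouniversal F.mapDerivedCategory
      (𝟙 (F.mapDerivedCategory.obj ((singleFunctor C 0).obj a))))
    (S : DerivedCategory M) (b : ℤ) [S.IsGE b] [S.IsLE b]
    (hS : F.essImage ((homologyFunctor M b).obj S)) :
    ∃ (A : DerivedCategory C) (α : F.mapDerivedCategory.obj A ≅ S),
      IsCouniversal F.mapDerivedCategory α.hom := by
  obtain ⟨a, ⟨e⟩⟩ := hS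
  obtain ⟨e'⟩ := nonempty_iso_single_shift_neg S b
  let α := (F.mapDerivedCategorySingleFunctor 0).app a ≪≫ (singleFunctor M 0).mapIso e
  have hα : IsCouniversal F.mapDerivedCategory α.hom := by
    simpa only [Category.id_comp] using (h a).comp_iso α
  exact ⟨_, ((F.mapDerivedCategory.commShiftIso (-b)).app _ ≪≫
    (shiftFunctor _ (-b)).mapIso α) ≪≫ e'.symm,
    ((isCouniversal_shift_iff (-b)).2 hα).comp_iso e'.symm⟩

lemma exists_isCouniversal_isGE_succ (h : ∀ a, IsCouniversal F.mapDerivedCategory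
      (𝟙 (F.mapDerivedCategory.obj ((singleFunctor C 0).obj a))))
    {X : DerivedCategory C} {Y : DerivedCategory M} {b : ℤ} [Y.IsGE b]
    (hY : ∀ k, F.essImage ((homologyFunctor M k).obj Y)) {ε : F.mapDerivedCategory.obj X ⟶ Y}
    (hε : IsCouniversal F.mapDerivedCategory ε) :
    ∃ (X' : DerivedCategory C) (Y' : DerivedCategory M) (ε' : F.mapDerivedCategory.obj X' ⟶ Y'),
      Y'.IsGE (b + 1) ∧ (∀ k, F.essImage ((homologyFunctor M k).obj Y')) ∧
      IsCouniversal F.mapDerivedCategory ε' ∧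
      ∀ m, IsIso ((homologyFunctor M (m - 1)).map ε') → IsIso ((homologyFunctor M m).map ε') →
        IsIso ((homologyFunctor M m).map ε) := by
  obtain ⟨S, B, f', g', h', _, _, _, hT'⟩ := exists_triangle_of_isGE Y b
  have : (Triangle.mk f' g' h').obj₁.IsLE b := ‹S.IsLE b›
  have : (Triangle.mk f' g' h').obj₃.IsGE (b + 1) := ‹B.IsGE (b + 1)›
  obtain ⟨hS, hB⟩ := essImage_homology_of_distTriang hT' (b := b) hY
  obtain ⟨A, α, hα⟩ := exists_iso_isCouniversal_of_isGE_of_isLE h S b (hS b)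
  obtain ⟨f, hf : F.mapDerivedCategory.map f ≫ ε = α.hom ≫ f'⟩ := (hε A).2 (α.hom ≫ f')
  obtain ⟨X', g, δ, hT⟩ := distinguished_cocone_triangle f
  have hΦT := F.mapDerivedCategory.map_distinguished _ hT
  obtain ⟨ε', h₁, h₂⟩ := complete_distinguished_triangle_morphism _ _ hΦT hT' α.hom ε hf
  refine ⟨X', B, ε', inferInstance, hB, ?_, fun m hm hm' => ?_⟩
  · exact IsCouniversal.of_triangle₃ hT hT' hf h₁ ((Category.assoc _ _ _).symm.trans h₂) hα hε
  · let φ : F.mapDerivedCategory.mapTriangle.obj (.mk f g δ) ⟶ .mk f' g' h' :=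
      { hom₁ := α.hom, hom₂ := ε, hom₃ := ε', comm₁ := hf, comm₂ := h₁, comm₃ := h₂ }
    have : IsIso φ.hom₁ := inferInstanceAs (IsIso α.hom)
    exact isIso_homologyMap_hom₂ hΦT hT' φ (by lia : m - 1 + 1 = m)
      (@IsIso.epi_of_iso _ _ _ _ ((homologyFunctor M (m - 1)).map ε') hm) hm'

lemma IsCouniversal.isIso (h : ∀ a, IsCouniversal F.mapDerivedCategory
      (𝟙 (F.mapDerivedCategory.obj ((singleFunctor C 0).obj a))))
    {X : DerivedCategory C} {Y : DerivedCategory M} {ε : F.mapDerivedCategory.obj X ⟶ Y}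
    (hε : IsCouniversal F.mapDerivedCategory ε) (hY : TStructure.t.plus Y)
    (hY' : ∀ k, F.essImage ((homologyFunctor M k).obj Y)) : IsIso ε := by
  suffices ∀ (j : ℕ) (b m : ℤ), m < b + j → ∀ (X : DerivedCategory C) (Y : DerivedCategory M)
      (ε : F.mapDerivedCategory.obj X ⟶ Y), Y.IsGE b →
      (∀ k, F.essImage ((homologyFunctor M k).obj Y)) → IsCouniversal F.mapDerivedCategory ε →
      IsIso ((homologyFunctor M m).map ε) by
    obtain ⟨b, hb⟩ := hY
    exact (DerivedCategory.isIso_iff M ε).2 fun m =>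
      this (m + 1 - b).toNat b m (by lia) X Y ε ⟨hb.1⟩ hY' hε
  intro j
  induction j with
  | zero =>
    intro b m hm X Y ε _ _ hε
    have := hε.isGE b
    have hX := isZero_of_isGE (F.mapDerivedCategory.obj X) b m (by lia)
    have hY := isZero_of_isGE Y b m (by lia)
    exact ⟨0, hX.eq_of_src _ _, hY.eq_of_src _ _⟩
  | succ j ih =>
    intro b m hm X Y ε _ hY hε
    obtain ⟨X', Y', ε', hY'b, hY', hε', H⟩ := exists_isCouniversal_isGE_succ h (b := b) hY hε
    exact H m (ih (b + 1) (m - 1) (by lia) X' Y' ε' hY'b hY' hε')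
      (ih (b + 1) m (by lia) X' Y' ε' hY'b hY' hε')

end Devissage

section Tower

lemma existsUnique_sub_eq_and_eq {A : ℕ → Type*} [∀ k, AddCommGroup (A k)]
    (f : ∀ k, A (k + 1) → A k) (K : ℕ) (hf : ∀ k, K ≤ k → Function.Bijective (f k))
    (y : ∀ k, A k) (w : A K) : ∃! x : ∀ k, A k, (∀ k, x k - f k (x (k + 1)) = y k) ∧ x K = w := by
  induction K generalizing A with
  | zero =>
    choose g hg using fun k => (hf k (Nat.zero_le k)).2
    refine ⟨Nat.rec w fun k xk => g k (xk - y k), ⟨fun k => ?_, rfl⟩, fun x ⟨hx, hx₀⟩ => ?_⟩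
    · simp only [hg, sub_sub_cancel]
    · funext k
      induction k with
      | zero => exact hx₀
      | succ k ih =>
        apply (hf k (Nat.zero_le k)).1
        simp only [hg, ← ih, ← hx k, sub_sub_cancel]
  | succ K ih =>
    obtain ⟨x, ⟨hx, hxK⟩, hu⟩ := ih (fun k => f (k + 1)) (fun k hk => hf (k + 1) (by lia))
      (fun k => y (k + 1)) w
    refine ⟨Nat.rec (y 0 + f 0 (x 0)) fun k _ => x k, ⟨?_, hxK⟩, fun x' ⟨hx', hx'K⟩ => ?_⟩
    · rintro (_ | k)
      exacts [add_sub_cancel_right _ _, hx k]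
    · obtain rfl := hu (fun k => x' (k + 1)) ⟨fun k => hx' (k + 1), hx'K⟩
      funext k
      cases k with
      | zero => exact sub_eq_iff_eq_add.1 (hx' 0)
      | succ k => rfl

variable {D : Type u} [Category.{v} D]

/-- The transition map `X (k + 1) ⟶ X k` of a tower. -/
abbrev transition (X : ℕᵒᵖ ⥤ D) (k : ℕ) : X.obj (op (k + 1)) ⟶ X.obj (op k) :=
  X.map (homOfLE (Nat.le_succ k)).op

/-- The tower `X 0 ⟵ X 1 ⟵ ⋯ ⟵ X K = X K = ⋯` which stops at stage `K`. -/
abbrev stopAt (X : ℕᵒᵖ ⥤ D) (K : ℕ) : ℕᵒᵖ ⥤ D :=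
  (Monotone.functor (f := fun k => min k K) fun _ _ h => min_le_min_right K h).op ⋙ X

/-- The projection of a tower to the tower which stops at stage `K`. -/
def toStopAt (X : ℕᵒᵖ ⥤ D) (K : ℕ) : X ⟶ stopAt X K where
  app k := X.map (homOfLE (min_le_left k.unop K)).op
  naturality _ _ f := (X.map_comp _ _).symm.trans
    (X.map_comp (homOfLE (min_le_left _ K)).op
      ((Monotone.functor (f := fun k => min k K) fun _ _ h => min_le_min_right K h).op.map f))

lemma isIso_transition_stopAt (X : ℕᵒᵖ ⥤ D) {K k : ℕ} (hk : K ≤ k) :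
    IsIso (transition (stopAt X K) k) := by
  have : IsIso (homOfLE (min_le_min_right K (Nat.le_succ k))).op :=
    ⟨(homOfLE (by lia : min (k + 1) K ≤ min k K)).op, rfl, rfl⟩
  exact Functor.map_isIso X (homOfLE (min_le_min_right K (Nat.le_succ k))).op

lemma isIso_toStopAt_app (X : ℕᵒᵖ ⥤ D) {K k : ℕ} (hk : k ≤ K) :
    IsIso ((toStopAt X K).app (op k)) := by
  have : IsIso (homOfLE (min_le_left k K)).op :=
    ⟨(homOfLE (by lia : k ≤ min k K)).op, rfl, rfl⟩
  exact inferInstanceAs (IsIso (X.map (homOfLE (min_le_left k K)).op))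

lemma isIso_map_toStopAt_app {A : Type*} [Category* A] (H : D ⥤ A) (X : ℕᵒᵖ ⥤ D) {K : ℕ}
    (hX : ∀ k, K ≤ k → IsIso (H.map (transition X k))) (k : ℕ) :
    IsIso (H.map ((toStopAt X K).app (op k))) := by
  obtain hk | hk := le_total k K
  · have := isIso_toStopAt_app X hk
    infer_instance
  induction k, hk using Nat.le_induction with
  | base =>
    have := isIso_toStopAt_app X (le_refl K)
    infer_instance
  | succ k hk ih =>
    have := hX k hk
    have := isIso_transition_stopAt X hk
    have nat : H.map ((toStopAt X K).app (op (k + 1))) ≫ H.map (transition (stopAt X K) k) =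
        H.map (transition X k) ≫ H.map ((toStopAt X K).app (op k)) := by
      rw [← H.map_comp, ← H.map_comp, ← (toStopAt X K).naturality]
    have : IsIso (H.map ((toStopAt X K).app (op (k + 1))) ≫
        H.map (transition (stopAt X K) k)) := nat ▸ inferInstance
    exact IsIso.of_isIso_comp_right _ (H.map (transition (stopAt X K) k))

variable [Preadditive D]

/-- The endomorphism "identity minus shift" of the product of a tower, whose fibre is the homotopy
limit. -/
noncomputable def towerDiff (X : ℕᵒᵖ ⥤ D) [HasProduct fun k => X.obj (op k)] :
    (∏ᶜ fun k => X.obj (op k)) ⟶ ∏ᶜ fun k => X.obj (op k) :=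
  Pi.lift fun k => Pi.π _ k - Pi.π _ (k + 1) ≫ transition X k

lemma towerDiff_π (X : ℕᵒᵖ ⥤ D) [HasProduct fun k => X.obj (op k)] (k : ℕ) :
    towerDiff X ≫ Pi.π (fun k => X.obj (op k)) k =
      Pi.π _ k - Pi.π _ (k + 1) ≫ transition X k :=
  Pi.lift_π _ _

lemma towerDiff_comp_map {X T : ℕᵒᵖ ⥤ D} [HasProduct fun k => X.obj (op k)]
    [HasProduct fun k => T.obj (op k)] (a : X ⟶ T) :
    towerDiff X ≫ Limits.Pi.map (fun k => a.app (op k)) =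
      Limits.Pi.map (fun k => a.app (op k)) ≫ towerDiff T := by
  refine Pi.hom_ext _ _ fun k => ?_
  simp only [Category.assoc, Pi.map_π, towerDiff_π, reassoc_of% towerDiff_π, Preadditive.sub_comp,
    Preadditive.comp_sub, NatTrans.naturality, Pi.map_π_assoc]

lemma existsUnique_comp_towerDiff_eq_and (X : ℕᵒᵖ ⥤ D) [HasProduct fun k => X.obj (op k)] (K : ℕ)
    (hX : ∀ k, K ≤ k → IsIso (transition X k)) {Z : D} (y : Z ⟶ ∏ᶜ fun k => X.obj (op k))
    (w : Z ⟶ X.obj (op K)) :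
    ∃! x : Z ⟶ ∏ᶜ fun k => X.obj (op k), x ≫ towerDiff X = y ∧ x ≫ Pi.π _ K = w := by
  have hf (k : ℕ) (hk : K ≤ k) :
      Function.Bijective fun x : Z ⟶ X.obj (op (k + 1)) => x ≫ transition X k :=
    have := hX k hk
    (asIso (transition X k)).homToEquiv.bijective
  obtain ⟨x, ⟨hx, hxK⟩, hu⟩ := existsUnique_sub_eq_and_eq (A := fun k => (Z ⟶ X.obj (op k)))
    (fun k x => x ≫ transition X k) K hf (fun k => y ≫ Pi.π _ k) w
  refine ⟨Pi.lift x, ⟨Pi.hom_ext _ _ fun k => ?_, (Pi.lift_π _ _).trans hxK⟩, ?_⟩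
  · simp only [← hx k, Category.assoc, towerDiff_π, Preadditive.comp_sub, Pi.lift_π,
      Pi.lift_π_assoc]
  · rintro x' ⟨rfl, hx'K⟩
    refine Pi.hom_ext _ _ fun k => ?_
    rw [Pi.lift_π, ← hu (fun k => x' ≫ Pi.π _ k) ⟨fun k => ?_, hx'K⟩]
    simp only [Category.assoc, towerDiff_π, Preadditive.comp_sub]

variable [HasZeroObject D] [HasShift D ℤ] [∀ k : ℤ, (shiftFunctor D k).Additive]
  [Pretriangulated D]

/-- `i : L ⟶ ∏ X k` exhibits `L` as a homotopy limit of the tower `X`, i.e. as a fibre of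
`towerDiff X`. -/
def IsHomotopyLimit (X : ℕᵒᵖ ⥤ D) [HasProduct fun k => X.obj (op k)] {L : D}
    (i : L ⟶ ∏ᶜ fun k => X.obj (op k)) : Prop :=
  ∃ h, Triangle.mk i (towerDiff X) h ∈ distTriang _

lemma exists_isHomotopyLimit (X : ℕᵒᵖ ⥤ D) [HasProduct fun k => X.obj (op k)] :
    ∃ (L : D) (i : L ⟶ ∏ᶜ fun k => X.obj (op k)), IsHomotopyLimit X i := by
  obtain ⟨L, i, h, hT⟩ := distinguished_cocone_triangle₁ (towerDiff X)
  exact ⟨L, i, h, hT⟩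

lemma IsHomotopyLimit.exists_lift {X : ℕᵒᵖ ⥤ D} [HasProduct fun k => X.obj (op k)] {L : D}
    {i : L ⟶ ∏ᶜ fun k => X.obj (op k)} (hi : IsHomotopyLimit X i) {Y : D}
    (p : ∀ k, Y ⟶ X.obj (op k)) (hp : ∀ k, p (k + 1) ≫ transition X k = p k) :
    ∃ z : Y ⟶ L, ∀ k, z ≫ i ≫ Pi.π _ k = p k := by
  obtain ⟨h, hT⟩ := hi
  have hp' : Pi.lift p ≫ towerDiff X = 0 := Pi.hom_ext _ _ fun k => by
    simp only [Category.assoc, towerDiff_π, Preadditive.comp_sub, Pi.lift_π, Pi.lift_π_assoc, hp,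
      sub_self, zero_comp]
  obtain ⟨z, hz⟩ : ∃ z : Y ⟶ L, Pi.lift p = z ≫ i := Triangle.coyoneda_exact₂ _ hT _ hp'
  exact ⟨z, fun k => by rw [← Category.assoc, ← hz, Pi.lift_π]⟩

lemma IsHomotopyLimit.isIso_comp_π {X : ℕᵒᵖ ⥤ D} [HasProduct fun k => X.obj (op k)] {L : D}
    {i : L ⟶ ∏ᶜ fun k => X.obj (op k)} (hi : IsHomotopyLimit X i) (K : ℕ)
    (hX : ∀ k, K ≤ k → IsIso (transition X k)) : IsIso (i ≫ Pi.π _ K) := by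
  obtain ⟨h, hT⟩ := hi
  have hid : i ≫ towerDiff X = 0 := comp_distTriang_mor_zero₁₂ _ hT
  have : Mono i := by
    obtain ⟨s, ⟨hs, -⟩, -⟩ := existsUnique_comp_towerDiff_eq_and X K hX (𝟙 _) 0
    refine (Triangle.mor₃_eq_zero_iff_mono₁ _ hT).1 ?_
    have hdh : towerDiff X ≫ h = 0 := comp_distTriang_mor_zero₂₃ _ hT
    calc
      h = (s ≫ towerDiff X) ≫ h := by rw [hs, Category.id_comp]
      _ = 0 := by rw [Category.assoc, hdh, comp_zero]
  refine isIso_of_yoneda_map_bijective _ fun Z => ⟨fun f g hfg => ?_, fun w => ?_⟩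
  · rw [← cancel_mono i]
    refine (existsUnique_comp_towerDiff_eq_and X K hX 0 (f ≫ i ≫ Pi.π _ K)).unique ?_ ?_
    · exact ⟨by rw [Category.assoc, hid, comp_zero], Category.assoc _ _ _⟩
    · exact ⟨by rw [Category.assoc, hid, comp_zero], (Category.assoc _ _ _).trans hfg.symm⟩
  · obtain ⟨x, ⟨hx, hxK⟩, -⟩ := existsUnique_comp_towerDiff_eq_and X K hX 0 w
    obtain ⟨z, rfl⟩ : ∃ z : Z ⟶ L, x = z ≫ i := Triangle.coyoneda_exact₂ _ hT _ hx
    exact ⟨z, (Category.assoc _ _ _).symm.trans hxK⟩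

end Tower

section HomologyOfTower

variable {A : Type u} [Category.{v} A] [Abelian A] [HasDerivedCategory.{w} A]

lemma isLE_of_isIso_homologyMap_mor₁ {T : Triangle (DerivedCategory A)} (hT : T ∈ distTriang _)
    {b : ℤ} (h : ∀ m, b < m → IsIso ((homologyFunctor A m).map T.mor₁)) : T.obj₃.IsLE b := by
  refine (isLE_iff _ _).2 fun m hm => ?_
  have := h m hm
  have := h (m + 1) (by lia)
  exact (HomologySequence.exact₃ T hT m (m + 1) rfl).isZero_of_both_zeros
    ((HomologySequence.epi_homologyMap_mor₁_iff T hT m).1 inferInstance)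
    ((HomologySequence.mono_homologyMap_mor₁_iff T hT m (m + 1) rfl).1 inferInstance)

lemma IsHomotopyLimit.exists_isIso_homologyMap {X T : ℕᵒᵖ ⥤ DerivedCategory A}
    [HasProduct fun k => X.obj (op k)] [HasProduct fun k => T.obj (op k)]
    {L L' : DerivedCategory A} {i : L ⟶ ∏ᶜ fun k => X.obj (op k)}
    {i' : L' ⟶ ∏ᶜ fun k => T.obj (op k)} (hi : IsHomotopyLimit X i) (hi' : IsHomotopyLimit T i')
    (a : X ⟶ T) {m₀ m₁ : ℤ} (hm : m₀ + 1 = m₁)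
    (h₀ : IsIso ((homologyFunctor A m₀).map (Limits.Pi.map fun k => a.app (op k))))
    (h₁ : IsIso ((homologyFunctor A m₁).map (Limits.Pi.map fun k => a.app (op k)))) :
    ∃ α : L ⟶ L', i ≫ (Limits.Pi.map fun k => a.app (op k)) = α ≫ i' ∧
      IsIso ((homologyFunctor A m₁).map α) := by
  obtain ⟨δ, hL⟩ := hi
  obtain ⟨δ', hL'⟩ := hi'
  obtain ⟨α, hα, hα'⟩ := complete_distinguished_triangle_morphism₁ _ _ hL hL' _ _
    (towerDiff_comp_map a)
  let φ : Triangle.mk i (towerDiff X) δ ⟶ Triangle.mk i' (towerDiff T) δ' :=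
    { hom₁ := α, hom₂ := Limits.Pi.map _, hom₃ := Limits.Pi.map _
      comm₁ := hα, comm₂ := towerDiff_comp_map a, comm₃ := hα' }
  exact ⟨α, hα, isIso_homologyMap_hom₁ hL hL' φ hm (@IsIso.epi_of_iso _ _ _ _ _ h₀) h₀ h₁
    (@IsIso.mono_of_iso _ _ _ _ _ h₁)⟩

variable [EnoughInjectives A] [HasProducts.{0} A]

lemma isIso_homologyMap_piMap {n : ℕ} (hA : AB4StarMinus A n) {I : Type}
    {X Y : I → DerivedCategory A} (f : ∀ i, X i ⟶ Y i) (hX : ∀ i, TStructure.t.plus (X i))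
    (hY : ∀ i, TStructure.t.plus (Y i)) [HasProduct X] [HasProduct Y] {b : ℤ}
    (hf : ∀ i m, b < m → IsIso ((homologyFunctor A m).map (f i))) {m : ℤ} (hm : b + n + 1 < m) :
    IsIso ((homologyFunctor A m).map (Limits.Pi.map f)) := by
  choose N g h hT using fun i => distinguished_cocone_triangle (f i)
  have hN (i : I) : TStructure.t.plus (N i) :=
    TStructure.t.plus.ext_of_isTriangulatedClosed₃ _ (hT i) (hX i) (hY i)
  have hX₁ (i : I) : TStructure.t.plus ((X i)⟦(1 : ℤ)⟧) := TStructure.t.plus.le_shift 1 _ (hX i)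
  let T (i : I) := Triangle.mk (f i) (g i) (h i)
  have : HasProduct fun i => (T i).obj₁ := ‹HasProduct X›
  have : HasProduct fun i => (T i).obj₂ := ‹HasProduct Y›
  have : HasProduct N := hasProduct_of_plus hN
  have : HasProduct fun i => (T i).obj₃ := ‹HasProduct N›
  have : HasProduct fun i => (T i).obj₁⟦(1 : ℤ)⟧ := hasProduct_of_plus hX₁
  have hP := productTriangle_distinguished T hT
  have : (∏ᶜ fun i => (T i).obj₃).IsLE (b + n) :=
    isLE_pi hA hN fun i => isLE_of_isIso_homologyMap_mor₁ (hT i) (hf i)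
  have : (productTriangle T).invRotate.obj₁.IsLE (b + n + 1) :=
    TStructure.t.isLE_shift (∏ᶜ fun i => (T i).obj₃) (b + n) (-1) (b + n + 1)
  exact isIso_homologyMap_mor₂ (inv_rot_of_distTriang _ hP) hm

lemma IsHomotopyLimit.isIso_homologyMap_comp_π {n : ℕ} (hA : AB4StarMinus A n)
    {X : ℕᵒᵖ ⥤ DerivedCategory A} (hX : ∀ k, TStructure.t.plus (X.obj (op k)))
    (hX' : ∀ (k : ℕ) (m : ℤ), -(k : ℤ) ≤ m → IsIso ((homologyFunctor A m).map (transition X k)))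
    [HasProduct fun k => X.obj (op k)] {L : DerivedCategory A}
    {i : L ⟶ ∏ᶜ fun k => X.obj (op k)} (hi : IsHomotopyLimit X i) {K : ℕ} {m : ℤ}
    (hm : n + 2 - (K : ℤ) ≤ m) : IsIso ((homologyFunctor A m).map (i ≫ Pi.π _ K)) := by
  let T := stopAt X K
  have hT (k : ℕ) : TStructure.t.plus (T.obj (op k)) := hX (min k K)
  have : HasProduct fun k => T.obj (op k) := hasProduct_of_plus hT
  let a (k : ℕ) : X.obj (op k) ⟶ T.obj (op k) := (toStopAt X K).app (op k)
  have ha (k : ℕ) (m : ℤ) (hm : -(K : ℤ) - 1 < m) : IsIso ((homologyFunctor A m).map (a k)) :=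
    isIso_map_toStopAt_app _ X (fun k hk => hX' k m (by lia)) k
  have hma (m : ℤ) (hm : n - (K : ℤ) < m) : IsIso ((homologyFunctor A m).map (Limits.Pi.map a)) :=
    isIso_homologyMap_piMap hA a hX hT ha (by lia)
  obtain ⟨L', i', hi'⟩ := exists_isHomotopyLimit T
  have := hi'.isIso_comp_π K fun k => isIso_transition_stopAt X
  obtain ⟨α, hα, _⟩ := hi.exists_isIso_homologyMap hi' (toStopAt X K) (by lia : m - 1 + 1 = m)
    (hma (m - 1) (by lia)) (hma m (by lia))
  have := ha K m (by lia)
  have comm : (i ≫ Pi.π _ K) ≫ a K = α ≫ i' ≫ Pi.π _ K := by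
    rw [← Category.assoc α, ← hα, Category.assoc, Category.assoc, Limits.Pi.map_π]
  have : IsIso ((homologyFunctor A m).map (i ≫ Pi.π _ K) ≫ (homologyFunctor A m).map (a K)) := by
    rw [← Functor.map_comp, comm, Functor.map_comp]
    infer_instance
  exact IsIso.of_isIso_comp_right _ ((homologyFunctor A m).map (a K))

end HomologyOfTower

section CouniversalTower

variable {C : Type u} [Category.{v} C] [Preadditive C] {M : Type u'} [Category.{v'} M]
  [Preadditive M] {Φ : C ⥤ M} [Φ.Additive]

lemma exists_functor_of_isCouniversal {J : Type*} [Category* J] (T : J ⥤ M)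
    (h : ∀ j, ∃ (X : C) (ε : Φ.obj X ⟶ T.obj j), IsCouniversal Φ ε) :
    ∃ (X : J ⥤ C) (ε : X ⋙ Φ ⟶ T), ∀ j, IsCouniversal Φ (ε.app j) := by
  choose X ε hε using h
  choose f hf using fun {i j : J} (a : i ⟶ j) => (hε j (X i)).2 (ε i ≫ T.map a)
  simp only [transpose_apply] at hf
  have f_id (j : J) : f (𝟙 j) = 𝟙 (X j) := (hε j _).1 <| by
    simp only [transpose_apply, hf, CategoryTheory.Functor.map_id, Category.comp_id,
      Category.id_comp]
  have f_comp {i j k : J} (a : i ⟶ j) (b : j ⟶ k) : f (a ≫ b) = f a ≫ f b := (hε k _).1 <| by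
    simp only [transpose_apply, hf, Functor.map_comp, Category.assoc, reassoc_of% hf]
  exact ⟨{ obj := X, map := f, map_id := f_id, map_comp := f_comp },
    { app := ε, naturality := fun _ _ => hf }, hε⟩

lemma isCouniversal_pi {I : Type*} {X : I → C} {Y : I → M} [HasProduct X] [HasProduct Y]
    {ε : ∀ i, Φ.obj (X i) ⟶ Y i} (h : ∀ i, IsCouniversal Φ (ε i)) :
    IsCouniversal Φ (Pi.lift fun i => Φ.map (Pi.π X i) ≫ ε i) := by
  refine fun Z => ⟨fun f g hfg => Pi.hom_ext _ _ fun i => (h i Z).1 ?_, fun y => ?_⟩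
  · simpa only [transpose_apply, Category.assoc, Pi.lift_π, ← Functor.map_comp_assoc] using
      congrArg (· ≫ Pi.π Y i) hfg
  · choose x hx using fun i => (h i Z).2 (y ≫ Pi.π Y i)
    refine ⟨Pi.lift x, Pi.hom_ext _ _ fun i => ?_⟩
    simp only [transpose_apply, Category.assoc, Pi.lift_π, ← Functor.map_comp_assoc, ← hx]

lemma map_towerDiff_comp {X : ℕᵒᵖ ⥤ C} {T : ℕᵒᵖ ⥤ M} (ε : X ⋙ Φ ⟶ T)
    [HasProduct fun k => X.obj (op k)] [HasProduct fun k => T.obj (op k)] :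
    Φ.map (towerDiff X) ≫ (Pi.lift fun k => Φ.map (Pi.π _ k) ≫ ε.app (op k)) =
      (Pi.lift fun k => Φ.map (Pi.π (fun k => X.obj (op k)) k) ≫ ε.app (op k)) ≫ towerDiff T := by
  refine Pi.hom_ext _ _ fun k => ?_
  have nat : Φ.map (transition X k) ≫ ε.app (op k) = ε.app (op (k + 1)) ≫ transition T k :=
    ε.naturality _
  simp only [Category.assoc, Pi.lift_π, Pi.lift_π_assoc, towerDiff_π, ← Functor.map_comp_assoc,
    Functor.map_sub, Functor.map_comp, Preadditive.sub_comp, Preadditive.comp_sub, nat]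

variable [HasZeroObject C] [HasShift C ℤ] [∀ k : ℤ, (shiftFunctor C k).Additive]
  [Pretriangulated C] [HasZeroObject M] [HasShift M ℤ] [∀ k : ℤ, (shiftFunctor M k).Additive]
  [Pretriangulated M] [Φ.CommShift ℤ] [Φ.IsTriangulated]

lemma IsHomotopyLimit.exists_isCouniversal {X : ℕᵒᵖ ⥤ C} {T : ℕᵒᵖ ⥤ M} {ε : X ⋙ Φ ⟶ T}
    (hε : ∀ k, IsCouniversal Φ (ε.app k)) [HasProduct fun k => X.obj (op k)]
    [HasProduct fun k => T.obj (op k)] {L : C} {L' : M} {i : L ⟶ ∏ᶜ fun k => X.obj (op k)}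
    {i' : L' ⟶ ∏ᶜ fun k => T.obj (op k)} (hi : IsHomotopyLimit X i) (hi' : IsHomotopyLimit T i') :
    ∃ α : Φ.obj L ⟶ L', IsCouniversal Φ α ∧
      ∀ k, α ≫ i' ≫ Pi.π _ k = Φ.map (i ≫ Pi.π _ k) ≫ ε.app (op k) := by
  obtain ⟨δ, hT⟩ := hi
  obtain ⟨δ', hT'⟩ := hi'
  let β := Pi.lift fun k => Φ.map (Pi.π (fun k => X.obj (op k)) k) ≫ ε.app (op k)
  have hβ : IsCouniversal Φ β := isCouniversal_pi fun k => hε (op k)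
  have comm : Φ.map (towerDiff X) ≫ β = β ≫ towerDiff T := map_towerDiff_comp ε
  obtain ⟨α, hα, hα'⟩ : ∃ α : Φ.obj L ⟶ L', Φ.map i ≫ β = α ≫ i' ∧
      (Φ.map δ ≫ (Φ.commShiftIso (1 : ℤ)).hom.app L) ≫ α⟦(1 : ℤ)⟧' = β ≫ δ' :=
    complete_distinguished_triangle_morphism₁ _ _ (Φ.map_distinguished _ hT) hT' _ _ comm
  refine ⟨α, IsCouniversal.of_triangle₁ hT hT' hα comm ((Category.assoc _ _ _).symm.trans hα') hβ
    hβ, fun k => ?_⟩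
  rw [← Category.assoc, ← hα, Category.assoc, Pi.lift_π, Functor.map_comp_assoc]

end CouniversalTower

section TruncationTower

variable {A : Type u} [Category.{v} A] [Abelian A] [HasDerivedCategory.{w} A]

/-- The tower of truncations `τ≥0 Y ⟵ τ≥-1 Y ⟵ τ≥-2 Y ⟵ ⋯`. -/
noncomputable def truncationTower (Y : DerivedCategory A) : ℕᵒᵖ ⥤ DerivedCategory A where
  obj k := (TStructure.t.truncGE (-k.unop)).obj Y
  map f := (TStructure.t.natTransTruncGEOfLE _ _
    (neg_le_neg (Int.ofNat_le.2 (leOfHom f.unop)))).app Y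
  map_id _ := TStructure.t.natTransTruncGEOfLE_refl_app _ Y
  map_comp _ _ := (TStructure.t.natTransTruncGEOfLE_trans_app _ _ _ _ _ Y).symm

/-- The projection of an object to the tower of its truncations. -/
noncomputable def toTruncationTower (Y : DerivedCategory A) (k : ℕ) :
    Y ⟶ (truncationTower Y).obj (op k) :=
  (TStructure.t.truncGEπ (-k)).app Y

lemma toTruncationTower_comp_transition (Y : DerivedCategory A) (k : ℕ) :
    toTruncationTower Y (k + 1) ≫ transition (truncationTower Y) k = toTruncationTower Y k :=
  TStructure.t.π_natTransTruncGEOfLE_app _ _ (neg_le_neg (Int.ofNat_le.2 k.le_succ)) Y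

lemma plus_truncationTower_obj (Y : DerivedCategory A) (k : ℕᵒᵖ) :
    TStructure.t.plus ((truncationTower Y).obj k) :=
  ⟨-k.unop, (inferInstance : TStructure.t.IsGE ((TStructure.t.truncGE (-(k.unop : ℤ))).obj Y) _)⟩

lemma isIso_homologyMap_toTruncationTower (Y : DerivedCategory A) {k : ℕ} {m : ℤ}
    (hm : -(k : ℤ) ≤ m) : IsIso ((homologyFunctor A m).map (toTruncationTower Y k)) :=
  have : ((TStructure.t.triangleLTGE (-k)).obj Y).obj₁.IsLE (-k - 1) := inferInstance
  isIso_homologyMap_mor₂ (TStructure.t.triangleLTGE_distinguished _ Y) (by lia : -(k : ℤ) - 1 < m)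

lemma isIso_homologyMap_transition_truncationTower (Y : DerivedCategory A) {k : ℕ} {m : ℤ}
    (hm : -(k : ℤ) ≤ m) :
    IsIso ((homologyFunctor A m).map (transition (truncationTower Y) k)) := by
  have := isIso_homologyMap_toTruncationTower Y (by lia : -((k + 1 : ℕ) : ℤ) ≤ m)
  have : IsIso ((homologyFunctor A m).map (toTruncationTower Y (k + 1)) ≫
      (homologyFunctor A m).map (transition (truncationTower Y) k)) := by
    rw [← Functor.map_comp, toTruncationTower_comp_transition]
    exact isIso_homologyMap_toTruncationTower Y hm
  exact IsIso.of_isIso_comp_left ((homologyFunctor A m).map (toTruncationTower Y (k + 1))) _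

lemma essImage_homology_truncationTower_obj {C : Type*} [Category* C] [Preadditive C]
    [HasZeroObject C] {F : C ⥤ A} [F.Additive] {Y : DerivedCategory A}
    (hY : ∀ k, F.essImage ((homologyFunctor A k).obj Y)) (j : ℕᵒᵖ) (k : ℤ) :
    F.essImage ((homologyFunctor A k).obj ((truncationTower Y).obj j)) := by
  let T := (TStructure.t.triangleLTGE (-j.unop)).obj Y
  have hT : T ∈ distTriang _ := TStructure.t.triangleLTGE_distinguished _ Y
  have : T.obj₁.IsLE (-j.unop - 1) := inferInstance
  have : T.obj₃.IsGE (-j.unop - 1 + 1) := (sub_add_cancel (-j.unop : ℤ) 1).symm ▸ inferInstance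
  exact (essImage_homology_of_distTriang (b := -j.unop - 1) hT hY).2 k

lemma IsHomotopyLimit.nonempty_iso_of_truncationTower [EnoughInjectives A] [HasProducts.{0} A]
    {n : ℕ} (hA : AB4StarMinus A n) {Y L : DerivedCategory A}
    [HasProduct fun k => (truncationTower Y).obj (op k)]
    {i : L ⟶ ∏ᶜ fun k => (truncationTower Y).obj (op k)}
    (hi : IsHomotopyLimit (truncationTower Y) i) : Nonempty (Y ≅ L) := by
  obtain ⟨z, hz⟩ := hi.exists_lift _ (toTruncationTower_comp_transition Y)
  have : IsIso z := (DerivedCategory.isIso_iff A z).2 fun m => by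
    obtain ⟨K, hK⟩ : ∃ K : ℕ, n + 2 - (K : ℤ) ≤ m := ⟨(n + 2 - m).toNat, by lia⟩
    have := hi.isIso_homologyMap_comp_π hA (fun k => plus_truncationTower_obj Y (op k))
      (fun _ _ => isIso_homologyMap_transition_truncationTower Y) hK
    have : IsIso ((homologyFunctor A m).map z ≫ (homologyFunctor A m).map (i ≫ Pi.π _ K)) := by
      rw [← Functor.map_comp, hz]
      exact isIso_homologyMap_toTruncationTower Y (by lia)
    exact IsIso.of_isIso_comp_right _ ((homologyFunctor A m).map (i ≫ Pi.π _ K))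
  exact ⟨asIso z⟩

end TruncationTower

section Unbounded

variable {C : Type u} [Category.{v} C] [Abelian C] [HasDerivedCategory.{w} C]
  {M : Type u'} [Category.{v'} M] [Abelian M] [HasDerivedCategory.{w'} M]
  {F : C ⥤ M} [F.Additive] [PreservesFiniteLimits F] [PreservesFiniteColimits F]
  [F.ReflectsIsomorphisms]

lemma isIso_homologyMap_transition_of_natIso {X : ℕᵒᵖ ⥤ DerivedCategory C}
    {T : ℕᵒᵖ ⥤ DerivedCategory M} (ε : X ⋙ F.mapDerivedCategory ≅ T) {k : ℕ} {m : ℤ}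
    (hT : IsIso ((homologyFunctor M m).map (transition T k))) :
    IsIso ((homologyFunctor C m).map (transition X k)) :=
  (isIso_homologyMap_map_iff (F := F) _ m).1
    ((NatIso.isIso_map_iff (Functor.isoWhiskerRight ε (homologyFunctor M m)) _).2 hT)

lemma IsHomotopyLimit.isIso_of_natIso [EnoughInjectives C] [HasProducts.{0} C]
    [EnoughInjectives M] [HasProducts.{0} M] {n : ℕ} (hC : AB4StarMinus C n)
    (hM : AB4StarMinus M n) {X : ℕᵒᵖ ⥤ DerivedCategory C} {T : ℕᵒᵖ ⥤ DerivedCategory M}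
    (ε : X ⋙ F.mapDerivedCategory ≅ T) (hX : ∀ k, TStructure.t.plus (X.obj (op k)))
    (hT : ∀ k, TStructure.t.plus (T.obj (op k)))
    (hT' : ∀ (k : ℕ) (m : ℤ), -(k : ℤ) ≤ m → IsIso ((homologyFunctor M m).map (transition T k)))
    [HasProduct fun k => X.obj (op k)] [HasProduct fun k => T.obj (op k)]
    {L : DerivedCategory C} {L' : DerivedCategory M} {i : L ⟶ ∏ᶜ fun k => X.obj (op k)}
    {i' : L' ⟶ ∏ᶜ fun k => T.obj (op k)} (hi : IsHomotopyLimit X i) (hi' : IsHomotopyLimit T i')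
    {α : F.mapDerivedCategory.obj L ⟶ L'} (hα : ∀ k, α ≫ i' ≫ Pi.π _ k =
      F.mapDerivedCategory.map (i ≫ Pi.π _ k) ≫ ε.hom.app (op k)) : IsIso α :=
  (DerivedCategory.isIso_iff M α).2 fun m => by
    obtain ⟨K, hK⟩ : ∃ K : ℕ, n + 2 - (K : ℤ) ≤ m := ⟨(n + 2 - m).toNat, by lia⟩
    have := (isIso_homologyMap_map_iff (F := F) _ m).2 (hi.isIso_homologyMap_comp_π hC hX
      (fun k m hm => isIso_homologyMap_transition_of_natIso ε (hT' k m hm)) hK)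
    have := hi'.isIso_homologyMap_comp_π hM hT hT' hK
    have : IsIso ((homologyFunctor M m).map α ≫ (homologyFunctor M m).map (i' ≫ Pi.π _ K)) := by
      rw [← Functor.map_comp, hα, Functor.map_comp]
      infer_instance
    exact IsIso.of_isIso_comp_right _ ((homologyFunctor M m).map (i' ≫ Pi.π _ K))

lemma exists_iso_isCouniversal [EnoughInjectives C] [HasProducts.{0} C] [EnoughInjectives M]
    [HasProducts.{0} M] {G : M ⥤ C} (adj : F ⊣ G) (hF : IsStrongSerre F) {n : ℕ}
    (hC : AB4StarMinus C n) (hM : AB4StarMinus M n) {Y : DerivedCategory M}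
    (hY : ∀ k, F.essImage ((homologyFunctor M k).obj Y)) :
    ∃ (X : DerivedCategory C) (e : F.mapDerivedCategory.obj X ≅ Y),
      IsCouniversal F.mapDerivedCategory e.hom := by
  have hT := plus_truncationTower_obj Y
  obtain ⟨X, ε, hε⟩ := exists_functor_of_isCouniversal (Φ := F.mapDerivedCategory)
    (truncationTower Y) fun j => exists_isCouniversal adj (hT j)
  have hX (j : ℕᵒᵖ) : TStructure.t.plus (X.obj j) := by
    obtain ⟨b, hb⟩ := hT j
    exact ⟨b, (hε j).isGE b⟩
  have (j : ℕᵒᵖ) : IsIso (ε.app j) := (hε j).isIso (isCouniversal_id_single adj hF) (hT j)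
    (essImage_homology_truncationTower_obj hY j)
  have := NatIso.isIso_of_isIso_app ε
  have : HasProduct fun k => X.obj (op k) := hasProduct_of_plus fun k => hX (op k)
  have : HasProduct fun k => (truncationTower Y).obj (op k) :=
    hasProduct_of_plus fun k => hT (op k)
  obtain ⟨L, i, hi⟩ := exists_isHomotopyLimit X
  obtain ⟨L', i', hi'⟩ := exists_isHomotopyLimit (truncationTower Y)
  obtain ⟨α, hα, hαπ⟩ := hi.exists_isCouniversal hε hi'
  have : IsIso α := IsHomotopyLimit.isIso_of_natIso hC hM (asIso ε)
    (fun k => hX (op k)) (fun k => hT (op k))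
    (fun _ _ => isIso_homologyMap_transition_truncationTower Y) hi hi' hαπ
  obtain ⟨e⟩ := hi'.nonempty_iso_of_truncationTower hM
  exact ⟨L, asIso α ≪≫ e.symm, hα.comp_iso e.symm⟩

end Unbounded

end UnboundedEquivalence

open UnboundedEquivalence in
theorem unbounded_equivalence_of_strong_serre
    {C : Type u} [Category.{v} C] [Abelian C] [EnoughInjectives C] [HasProducts.{0} C]
    [HasDerivedCategory.{w} C]
    {M : Type u'} [Category.{v'} M] [Abelian M] [EnoughInjectives M] [HasProducts.{0} M]
    [HasDerivedCategory.{w'} M]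
    (F : C ⥤ M) [F.Additive] [PreservesFiniteLimits F] [PreservesFiniteColimits F]
    [F.Full] [F.Faithful] (G : M ⥤ C) (adj : F ⊣ G)
    (hF : IsStrongSerre F)
    (n : ℕ) (hC : AB4StarMinus C n) (hM : AB4StarMinus M n) :
    (∀ X Y : DerivedCategory C,
        Function.Bijective (fun f : X ⟶ Y => F.mapDerivedCategory.map f)) ∧
      (∀ Y : DerivedCategory M,
        (∀ k : ℤ, F.essImage ((DerivedCategory.homologyFunctor M k).obj Y)) →
        ∃ X : DerivedCategory C, Nonempty (F.mapDerivedCategory.obj X ≅ Y)) := by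
  refine ⟨fun X Y => ?_, fun Y hY => ?_⟩
  · obtain ⟨L, e, he⟩ := exists_iso_isCouniversal adj hF hC hM (Y := F.mapDerivedCategory.obj Y)
      fun k => ⟨_, ⟨((mapDerivedCategoryCompHomologyIso F k).app Y).symm⟩⟩
    obtain ⟨η, hη : F.mapDerivedCategory.map η ≫ e.hom = 𝟙 _⟩ := (he Y).2 (𝟙 _)
    have : IsIso (F.mapDerivedCategory.map η) := by
      rw [(Iso.comp_hom_eq_id e).1 hη]
      infer_instance
    have := isIso_of_reflects_iso η F.mapDerivedCategory
    exact IsCouniversal.bijective_map (hη ▸ he.iso_comp (asIso η)) X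
  · obtain ⟨X, e, -⟩ := exists_iso_isCouniversal adj hF hC hM hY
    exact ⟨X, ⟨e⟩⟩
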